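/- Uniqueness of the conjugating power of a generator: let σ_i be an Artin generator of B_n and let a ∈ B_n be an element that does not commute with σ_i. If integers j and q satisfy σ_i^(−j) a σ_i^j = σ_i^(−q) a σ_i^q, then j = q. -/

import Mathlib

/-- The Artin braid relations on `m` generators (for the braid group `B_{m+1}`):
commutation `σ_i σ_j = σ_j σ_i` for `|i - j| > 1`, and the braid relation
`σ_i σ_j σ_i = σ_j σ_i σ_j` for `j = i + 1`, written as relators. -/
def braidRels (m : ℕ) : Set (FreeGroup (Fin m)) :=
  { r | (∃ i j : Fin m, (i : ℕ) + 1 < (j : ℕ) ∧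
          r = FreeGroup.of i * FreeGroup.of j * (FreeGroup.of i)⁻¹ * (FreeGroup.of j)⁻¹) ∨
        (∃ i j : Fin m, (i : ℕ) + 1 = (j : ℕ) ∧
          r = FreeGroup.of i * FreeGroup.of j * FreeGroup.of i *
              (FreeGroup.of j * FreeGroup.of i * FreeGroup.of j)⁻¹) }

/-- The braid group `B_n`, presented on the `n - 1` Artin generators. -/
abbrev BraidGroup (n : ℕ) : Type := PresentedGroup (braidRels (n - 1))

/-- The Artin generator `σ_i` of the braid group `B_n`. -/
def σ {n : ℕ} (i : Fin (n - 1)) : BraidGroup n := PresentedGroup.of i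

/-!
If `j ≠ q`, the relation says that `a` commutes with a nonzero power of `σ i`. So the point is that,
for any two generators, `a * σ t ^ k = σ i ^ k * a` with `k ≠ 0` forces `a * σ t = σ i * a`.

In the positive braid monoid this follows from Garside's description of the least common multiple of
two generators: if `a` starts with the generator `s ≠ i`, then `σ i ^ k * a = a * σ t ^ k` makes `a`
divisible by the complement of `i` in the lcm of `i` and `s`. This complement intertwines `σ i` with
another generator and can be cancelled, so that induction on the length of `a` applies.

The full twist is central and every positive braid divides one of its powers. Hence the monoid
embeds in its localization at the full twist through the braid group, and every braid becomes
positive after multiplication by a power of the full twist.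
-/

universe u

variable {M : Type u} [Monoid M]

theorem semiconjBy_of_mul_left [IsLeftCancelMul M] {u b x y z : M} (hu : SemiconjBy u y z)
    (h : SemiconjBy (u * b) x z) : SemiconjBy b x y := by
  refine mul_left_cancel (a := u) ?_
  rw [← mul_assoc, h.eq, ← mul_assoc, ← hu.eq, mul_assoc]

theorem semiconjBy_zpow_sub_of_conj_eq {G : Type*} [Group G] {a x y : G} {j q : ℤ}
    (h : x ^ (-j) * a * y ^ j = x ^ (-q) * a * y ^ q) :
    SemiconjBy a (y ^ (j - q)) (x ^ (j - q)) := by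
  calc a * y ^ (j - q) = x ^ j * (x ^ (-j) * a * y ^ j) * y ^ (-q) := by group
    _ = x ^ j * (x ^ (-q) * a * y ^ q) * y ^ (-q) := by rw [h]
    _ = x ^ (j - q) * a := by group

/-! ### Central elements with cofinal powers -/

/-- A central element `c` such that every element of the monoid divides a power of `c` on the left;
inverting `c` then inverts the whole monoid. -/
structure IsCentralDenominator (c : M) : Prop where
  commute : ∀ x, Commute c x
  exists_dvd_pow : ∀ x, ∃ N : ℕ, x ∣ c ^ N

theorem isCentralDenominator_of_closure_eq_top {c : M} {s : Set M} (hs : Submonoid.closure s = ⊤)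
    (hcomm : ∀ x ∈ s, Commute c x) (hdvd : ∀ x ∈ s, x ∣ c) : IsCentralDenominator c := by
  have hcentral (x : M) : Commute c x := by
    induction hs ▸ Submonoid.mem_top x using Submonoid.closure_induction with
    | mem y hy => exact hcomm y hy
    | one => exact Commute.one_right c
    | mul y z _ _ hy hz => exact hy.mul_right hz
  refine ⟨hcentral, fun x => ?_⟩
  induction hs ▸ Submonoid.mem_top x using Submonoid.closure_induction with
  | mem y hy => exact ⟨1, by simpa using hdvd y hy⟩
  | one => exact ⟨0, one_dvd _⟩
  | mul y z _ _ hy hz =>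
    obtain ⟨K, u, hu⟩ := hy
    obtain ⟨N, v, hv⟩ := hz
    refine ⟨K + N, v * u, ?_⟩
    calc c ^ (K + N) = y * (u * c ^ N) := by rw [pow_add, hu, mul_assoc]
      _ = y * (c ^ N * u) := by rw [((hcentral u).pow_left N).eq]
      _ = y * z * (v * u) := by simp only [hv, mul_assoc]

namespace IsCentralDenominator

variable {c : M}

theorem isUnit_map {N : Type*} [Monoid N] [IsLeftCancelMul M] (hc : IsCentralDenominator c)
    {f : M →* N} (hf : IsUnit (f c)) (x : M) : IsUnit (f x) := by
  obtain ⟨k, u, hu⟩ := hc.exists_dvd_pow x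
  have hcomm : Commute x u := by
    refine mul_left_cancel (a := x) ?_
    rw [← hu, ← ((hc.commute x).pow_left k).eq, hu, mul_assoc]
  have hpow : IsUnit (f x * f u) := by
    rw [← map_mul, ← hu, map_pow]
    exact hf.pow k
  exact ((hcomm.map f).isUnit_mul_iff.1 hpow).1

/-- The Ore set used to invert the central element `c`: numerator and denominator just swap. -/
abbrev oreSet (hc : IsCentralDenominator c) : OreLocalization.OreSet (Submonoid.powers c) :=
  have hcomm (x : M) (t : Submonoid.powers c) : (t : M) * x = x * t := by
    obtain ⟨_, k, rfl⟩ := t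
    exact (hc.commute x).pow_left k
  { ore_right_cancel := fun x y t h => ⟨t, by rw [hcomm, hcomm, h]⟩
    oreNum := fun x _ => x
    oreDenom := fun _ t => t
    ore_eq := hcomm }

theorem exists_injective_monoidHom [IsLeftCancelMul M] (hc : IsCentralDenominator c) :
    ∃ (G : Type u) (_ : Group G) (f : M →* G), Function.Injective f := by
  let _ := hc.oreSet
  let num : M →* OreLocalization (Submonoid.powers c) M := OreLocalization.numeratorHom
  have hunit : ∀ x, IsUnit (num x) :=
    hc.isUnit_map (OreLocalization.numerator_isUnit ⟨c, Submonoid.mem_powers c⟩)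
  refine ⟨_, inferInstance, Units.liftRight num (fun x => (hunit x).unit) fun _ => rfl,
    fun x y h => ?_⟩
  have hnum : num x = num y := congrArg Units.val h
  obtain ⟨u, v, hmul, huv⟩ := OreLocalization.oreDiv_eq_iff.1 hnum
  obtain rfl : (u : M) = v := by simpa using huv
  exact (mul_left_cancel (a := (u : M)) hmul).symm

variable {G : Type*} [Group G] {f : M →* G}

theorem commute_map (hc : IsCentralDenominator c) (hf : Subgroup.closure (Set.range f) = ⊤)
    (a : G) : Commute (f c) a := by
  have hle : Subgroup.closure (Set.range f) ≤ Subgroup.centralizer {f c} := by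
    rw [Subgroup.closure_le]
    rintro _ ⟨x, rfl⟩
    exact Subgroup.mem_centralizer_singleton_iff.2 ((hc.commute x).map f).symm
  exact (Subgroup.mem_centralizer_singleton_iff.1 (hle (hf ▸ Subgroup.mem_top a))).symm

theorem exists_mul_pow_eq (hc : IsCentralDenominator c)
    (hf : Subgroup.closure (Set.range f) = ⊤) (a : G) :
    ∃ (N : ℕ) (p : M), a * f c ^ N = f p := by
  induction hf ▸ Subgroup.mem_top a using Subgroup.closure_induction_left with
  | one => exact ⟨0, 1, by simp⟩
  | mul_left _ hx b _ hb =>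
    obtain ⟨x, rfl⟩ := hx
    obtain ⟨N, p, hp⟩ := hb
    exact ⟨N, x * p, by rw [mul_assoc, hp, map_mul]⟩
  | inv_mul_cancel _ hx b _ hb =>
    obtain ⟨x, rfl⟩ := hx
    obtain ⟨N, p, hp⟩ := hb
    obtain ⟨K, u, hu⟩ := hc.exists_dvd_pow x
    have hinv : (f x)⁻¹ * f c ^ K = f u := by rw [← map_pow, hu, map_mul, inv_mul_cancel_left]
    refine ⟨N + K, u * p, ?_⟩
    rw [pow_add, mul_assoc, ← mul_assoc b, hp, map_mul, ← hinv, mul_assoc,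
      ((hc.commute_map hf (f p)).pow_left K).eq]

theorem semiconjBy_of_positive (hc : IsCentralDenominator c)
    (hf : Subgroup.closure (Set.range f) = ⊤) (hinj : Function.Injective f) {x x' y y' : M}
    (hpos : ∀ p, SemiconjBy p x' y' → SemiconjBy p x y) {a : G}
    (h : SemiconjBy a (f x') (f y')) : SemiconjBy a (f x) (f y) := by
  obtain ⟨N, p, hp⟩ := hc.exists_mul_pow_eq hf a
  have hcN (b : G) : Commute (f c ^ N) b := (hc.commute_map hf b).pow_left N
  have hp' : SemiconjBy p x' y' := by
    refine hinj ?_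
    simpa only [map_mul, ← hp] using (h.mul_left (hcN (f x'))).eq
  have ha : a = f p * (f c ^ N)⁻¹ := by rw [← hp, mul_inv_cancel_right]
  rw [ha]
  exact ((hpos p hp').map f).mul_left (hcN (f x)).inv_left

end IsCentralDenominator

/-! ### The full twist -/

/-- `g 0, …, g (m - 1)` satisfy the braid relations of the standard generators of the braid group
on `m + 1` strands; the values of `g` from `m` on are irrelevant. -/
structure IsBraidSeq (g : ℕ → M) (m : ℕ) : Prop where
  commute : ∀ ⦃i j⦄, i + 1 < j → j < m → Commute (g i) (g j)
  braid : ∀ ⦃i⦄, i + 1 < m → g i * g (i + 1) * g i = g (i + 1) * g i * g (i + 1)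

/-- The product `g 0 * ⋯ * g (k - 1)`, which for the standard generators is the braid `δ` rotating
`k + 1` strands. -/
def braidRotation (g : ℕ → M) (k : ℕ) : M := ((List.range k).map g).prod

/-- The full twist `δ ^ (m + 1)` on `m + 1` strands. -/
def fullTwist (g : ℕ → M) (m : ℕ) : M := braidRotation g m ^ (m + 1)

theorem braidRotation_succ (g : ℕ → M) (k : ℕ) :
    braidRotation g (k + 1) = braidRotation g k * g k :=
  List.prod_range_succ g k

theorem braidRotation_succ' (g : ℕ → M) (k : ℕ) :
    braidRotation g (k + 1) = g 0 * braidRotation (fun i => g (i + 1)) k :=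
  List.prod_range_succ' g k

namespace IsBraidSeq

variable {g : ℕ → M} {m : ℕ}

theorem commute_braidRotation (hg : IsBraidSeq g m) {j k : ℕ} (hk : k < j) (hj : j < m) :
    Commute (braidRotation g k) (g j) := by
  induction k with
  | zero => exact Commute.one_left _
  | succ k ih =>
    rw [braidRotation_succ]
    exact (ih (by omega)).mul_left (hg.commute hk hj)

theorem semiconjBy_braidRotation (hg : IsBraidSeq g m) {j k : ℕ} (hj : j + 1 < k) (hk : k ≤ m) :
    SemiconjBy (braidRotation g k) (g j) (g (j + 1)) := by
  induction k, hj using Nat.le_induction with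
  | base =>
    have hbraid : SemiconjBy (g j * g (j + 1)) (g j) (g (j + 1)) := by
      rw [SemiconjBy, hg.braid (by omega), mul_assoc]
    rw [braidRotation_succ, braidRotation_succ, mul_assoc]
    exact SemiconjBy.mul_left (hg.commute_braidRotation (by omega) (by omega)) hbraid
  | succ k hjk ih =>
    rw [braidRotation_succ]
    exact (ih (by omega)).mul_left (hg.commute hjk (by omega)).symm

theorem semiconjBy_braidRotation_braidRotation (hg : IsBraidSeq g m) {k : ℕ} (hk : k + 1 ≤ m) :
    SemiconjBy (braidRotation g m) (braidRotation g k) (braidRotation (fun i => g (i + 1)) k) := by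
  induction k with
  | zero => exact SemiconjBy.one_right _
  | succ k ih =>
    rw [braidRotation_succ, braidRotation_succ]
    exact (ih (by omega)).mul_right (hg.semiconjBy_braidRotation hk le_rfl)

theorem semiconjBy_braidRotation_sq {k : ℕ} (hg : IsBraidSeq g (k + 1)) :
    SemiconjBy (braidRotation g (k + 1) ^ 2) (g k) (g 0) := by
  have hsq : braidRotation g (k + 1) ^ 2 =
      braidRotation (fun i => g (i + 1)) k * braidRotation g (k + 1) * g k := by
    rw [← (hg.semiconjBy_braidRotation_braidRotation le_rfl).eq, mul_assoc,
      ← braidRotation_succ, sq]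
  calc braidRotation g (k + 1) ^ 2 * g k
      = braidRotation g (k + 1) * braidRotation g (k + 1) * g k := by rw [sq]
    _ = g 0 * (braidRotation (fun i => g (i + 1)) k * braidRotation g (k + 1) * g k) := by
      nth_rw 1 [braidRotation_succ']
      simp only [mul_assoc]
    _ = g 0 * braidRotation g (k + 1) ^ 2 := by rw [hsq]

theorem semiconjBy_braidRotation_pow (hg : IsBraidSeq g m) {i p : ℕ} (h : i + p < m) :
    SemiconjBy (braidRotation g m ^ p) (g i) (g (i + p)) := by
  induction p with
  | zero => exact pow_zero (braidRotation g m) ▸ SemiconjBy.one_left (g i)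
  | succ p ih =>
    rw [pow_succ']
    exact (hg.semiconjBy_braidRotation h le_rfl).mul_left (ih (by omega))

theorem commute_fullTwist (hg : IsBraidSeq g m) {i : ℕ} (h : i < m) :
    Commute (fullTwist g m) (g i) := by
  obtain ⟨k, rfl⟩ : ∃ k, m = i + k + 1 := ⟨m - i - 1, by omega⟩
  have hlast := hg.semiconjBy_braidRotation_pow (i := i) (p := k) (by omega)
  have hfirst := hg.semiconjBy_braidRotation_pow (i := 0) (p := i) (by omega)
  rw [zero_add] at hfirst
  have hpow : fullTwist g (i + k + 1) = braidRotation g (i + k + 1) ^ i *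
      (braidRotation g (i + k + 1) ^ 2 * braidRotation g (i + k + 1) ^ k) := by
    rw [fullTwist, ← pow_add, ← pow_add]
    congr 1
    omega
  rw [hpow]
  exact hfirst.mul_left (hg.semiconjBy_braidRotation_sq.mul_left hlast)

theorem dvd_fullTwist (hg : IsBraidSeq g m) {i : ℕ} (h : i < m) : g i ∣ fullTwist g m := by
  have hshift := hg.semiconjBy_braidRotation_pow (i := 0) (p := i) (by omega)
  rw [zero_add] at hshift
  obtain ⟨k, rfl⟩ : ∃ k, m = k + 1 := ⟨m - 1, by omega⟩
  have hdvd : g i ∣ braidRotation g (k + 1) ^ (i + 1) := by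
    refine ⟨braidRotation g (k + 1) ^ i * braidRotation (fun i => g (i + 1)) k, ?_⟩
    rw [pow_succ, ← mul_assoc, ← hshift.eq, mul_assoc, ← braidRotation_succ']
  exact hdvd.trans (pow_dvd_pow _ (by omega))

end IsBraidSeq

/-! ### Artin monoids of small type -/

/-- The defining relations of the Artin monoid of a graph; `comm` includes the trivial case
`i = j`. -/
inductive ArtinRel {V : Type*} (Γ : SimpleGraph V) : FreeMonoid V → FreeMonoid V → Prop
  | comm {i j : V} (h : ¬Γ.Adj i j) : ArtinRel Γ (.of i * .of j) (.of j * .of i)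
  | braid {i j : V} (h : Γ.Adj i j) :
    ArtinRel Γ (.of i * .of j * .of i) (.of j * .of i * .of j)

/-- The Artin monoid whose Coxeter graph is `Γ`, all edges having label `3`: adjacent vertices
satisfy the braid relation and the others commute. -/
abbrev ArtinMonoid {V : Type*} (Γ : SimpleGraph V) : Type _ := PresentedMonoid (ArtinRel Γ)

namespace ArtinMonoid

variable {V : Type*} {Γ : SimpleGraph V} {i j k : V} {x y z : ArtinMonoid Γ}

/-- The generator of the Artin monoid at a vertex. -/
def gen (i : V) : ArtinMonoid Γ := PresentedMonoid.of (ArtinRel Γ) i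

/-- The element of the Artin monoid represented by a word. -/
abbrev mk (Γ : SimpleGraph V) : FreeMonoid V →* ArtinMonoid Γ := PresentedMonoid.mk (ArtinRel Γ)

theorem mk_of (i : V) : mk Γ (.of i) = gen i := rfl

theorem commute_gen (h : ¬Γ.Adj i j) : Commute (gen i : ArtinMonoid Γ) (gen j) :=
  PresentedMonoid.mk_eq_mk_of_rel (.comm h)

theorem gen_mul_left_comm (h : ¬Γ.Adj i j) (x : ArtinMonoid Γ) :
    gen i * (gen j * x) = gen j * (gen i * x) :=
  (commute_gen h).left_comm x

theorem gen_braid (h : Γ.Adj i j) :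
    gen i * gen j * gen i = (gen j * gen i * gen j : ArtinMonoid Γ) :=
  PresentedMonoid.mk_eq_mk_of_rel (.braid h)

theorem gen_braid_assoc (h : Γ.Adj i j) (x : ArtinMonoid Γ) :
    gen i * (gen j * (gen i * x)) = gen j * (gen i * (gen j * x)) := by
  simpa only [mul_assoc] using congrArg (· * x) (gen_braid h)

/-- Lifting a family of elements of a monoid which satisfies the relations of `ArtinMonoid Γ`. -/
def lift {N : Type*} [Monoid N] (f : V → N) (hcomm : ∀ ⦃i j⦄, ¬Γ.Adj i j → Commute (f i) (f j))
    (hbraid : ∀ ⦃i j⦄, Γ.Adj i j → f i * f j * f i = f j * f i * f j) : ArtinMonoid Γ →* N :=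
  PresentedMonoid.lift f fun _ _ h => by
    cases h with
    | comm h => simpa using (hcomm h).eq
    | braid h => simpa using hbraid h

/-- The word length with respect to the generators; the defining relations are homogeneous. -/
def length (x : ArtinMonoid Γ) : ℕ :=
  (lift (Γ := Γ) (fun _ => Multiplicative.ofAdd 1) (fun _ _ _ => .refl _)
    (fun _ _ _ => rfl) x).toAdd

@[simp]
theorem length_one : length (1 : ArtinMonoid Γ) = 0 := by
  simp [length]

@[simp]
theorem length_mul (x y : ArtinMonoid Γ) : length (x * y) = length x + length y := by
  simp [length]

@[simp]
theorem length_gen (i : V) : length (gen i : ArtinMonoid Γ) = 1 := rfl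

theorem not_gen_dvd_one (i : V) : ¬(gen i : ArtinMonoid Γ) ∣ 1 := by
  rintro ⟨x, hx⟩
  simpa [add_comm 1] using congrArg length hx

@[elab_as_elim]
theorem induction_gen_mul {p : ArtinMonoid Γ → Prop} (one : p 1)
    (gen_mul : ∀ i x, p x → p (gen i * x)) (x : ArtinMonoid Γ) : p x := by
  have hx : x ∈ Submonoid.closure (Set.range (PresentedMonoid.of (ArtinRel Γ))) :=
    PresentedMonoid.closure_range_of (ArtinRel Γ) ▸ Submonoid.mem_top x
  induction hx using Submonoid.closure_induction_left with
  | one => exact one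
  | mul_left _ hi x _ ih =>
    obtain ⟨i, rfl⟩ := hi
    exact gen_mul i x ih

open Classical in
/-- The complement of `i` towards `j`: the least common right multiple of the generators `i` and `j`
is `gen i * complement i j = gen j * complement j i`. -/
noncomputable def complement (i j : V) : ArtinMonoid Γ :=
  if i = j then 1 else if Γ.Adj i j then gen j * gen i else gen j

theorem complement_self (i : V) : complement i i = (1 : ArtinMonoid Γ) :=
  if_pos rfl

theorem complement_of_adj (h : Γ.Adj i j) :
    complement i j = (gen j * gen i : ArtinMonoid Γ) := by
  rw [complement, if_neg h.ne, if_pos h]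

theorem complement_of_not_adj (hne : i ≠ j) (h : ¬Γ.Adj i j) :
    complement i j = (gen j : ArtinMonoid Γ) := by
  rw [complement, if_neg hne, if_neg h]

theorem gen_dvd_complement (hne : i ≠ j) : (gen j : ArtinMonoid Γ) ∣ complement i j := by
  by_cases h : Γ.Adj i j
  · exact complement_of_adj h ▸ dvd_mul_right _ _
  · exact complement_of_not_adj hne h ▸ dvd_rfl

theorem commute_gen_complement (hi : ¬Γ.Adj k i) (hj : ¬Γ.Adj k j) :
    Commute (gen k) (complement i j : ArtinMonoid Γ) := by
  rw [complement]
  split_ifs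
  · exact Commute.one_right _
  · exact (commute_gen hj).mul_right (commute_gen hi)
  · exact commute_gen hj

theorem exists_semiconjBy_complement (i j : V) :
    ∃ i', SemiconjBy (complement i j : ArtinMonoid Γ) (gen i') (gen i) := by
  by_cases h : Γ.Adj i j
  · refine ⟨j, ?_⟩
    rw [complement_of_adj h, SemiconjBy, ← mul_assoc, gen_braid h]
  · refine ⟨i, ?_⟩
    rw [complement]
    split_ifs
    · exact SemiconjBy.one_left _
    · exact (commute_gen h).symm

/-! ### Least common multiples of generators -/

/-- `gen i * x` and `gen j * y` are the same right multiple of the least common multiple of `gen i`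
and `gen j`. -/
def FactorsThroughLcm (i : V) (x : ArtinMonoid Γ) (j : V) (y : ArtinMonoid Γ) : Prop :=
  ∃ z, x = complement i j * z ∧ y = complement j i * z

namespace FactorsThroughLcm

theorem of_eq (h : x = y) : FactorsThroughLcm i x i y :=
  ⟨x, by rw [complement_self, one_mul], by rw [complement_self, one_mul, h]⟩

theorem symm (h : FactorsThroughLcm i x j y) : FactorsThroughLcm j y i x :=
  let ⟨z, hx, hy⟩ := h
  ⟨z, hy, hx⟩

theorem mul_right (h : FactorsThroughLcm i x j y) (z : ArtinMonoid Γ) :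
    FactorsThroughLcm i (x * z) j (y * z) := by
  obtain ⟨w, rfl, rfl⟩ := h
  exact ⟨w * z, mul_assoc _ _ _, mul_assoc _ _ _⟩

theorem eq (h : FactorsThroughLcm i x i y) : x = y := by
  obtain ⟨z, rfl, rfl⟩ := h
  rfl

theorem iff_of_not_adj (hne : i ≠ j) (h : ¬Γ.Adj i j) :
    FactorsThroughLcm i x j y ↔ ∃ z, x = gen j * z ∧ y = gen i * z := by
  rw [FactorsThroughLcm, complement_of_not_adj hne h,
    complement_of_not_adj hne.symm fun h' => h h'.symm]

theorem iff_of_adj (h : Γ.Adj i j) :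
    FactorsThroughLcm i x j y ↔
      ∃ z, x = gen j * (gen i * z) ∧ y = gen i * (gen j * z) := by
  simp only [FactorsThroughLcm, complement_of_adj h, complement_of_adj h.symm, mul_assoc]

end FactorsThroughLcm

/-- Equal products `gen i * x = gen j * y` with `x` of length less than `L` factor through the least
common multiple of the two generators. -/
def LcmBelow (Γ : SimpleGraph V) (L : ℕ) : Prop :=
  ∀ ⦃i j : V⦄ ⦃x y : ArtinMonoid Γ⦄, length x < L → gen i * x = gen j * y →
    FactorsThroughLcm i x j y

namespace LcmBelow

variable {L : ℕ}

theorem gen_mul_left_cancel (hL : LcmBelow Γ L) (hx : length x < L)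
    (h : gen i * x = gen i * y) : x = y :=
  (hL hx h).eq

theorem exists_of_not_adj (hL : LcmBelow Γ L) (hx : length x < L) (hne : i ≠ j)
    (hij : ¬Γ.Adj i j) (h : gen i * x = gen j * y) : ∃ z, x = gen j * z ∧ y = gen i * z :=
  (FactorsThroughLcm.iff_of_not_adj hne hij).1 (hL hx h)

theorem exists_of_adj (hL : LcmBelow Γ L) (hx : length x < L) (hij : Γ.Adj i j)
    (h : gen i * x = gen j * y) : ∃ z, x = gen j * (gen i * z) ∧ y = gen i * (gen j * z) :=
  (FactorsThroughLcm.iff_of_adj hij).1 (hL hx h)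

theorem trans_of_not_adj_of_not_adj (hL : LcmBelow Γ L) (hx : length (gen i * x) ≤ L)
    (hik : ¬Γ.Adj i k) (hkj : ¬Γ.Adj k j) (h : gen i * x = gen j * y) :
    FactorsThroughLcm i (gen k * x) j (gen k * y) := by
  simp only [length_mul, length_gen] at hx
  obtain ⟨z, rfl, rfl⟩ := hL (by omega) h
  have hki : ¬Γ.Adj k i := fun h => hik h.symm
  exact ⟨gen k * z, (commute_gen_complement hki hkj).left_comm z,
    (commute_gen_complement hkj hki).left_comm z⟩

theorem trans_of_not_adj_of_adj (hL : LcmBelow Γ L) (hx : length (gen i * x) ≤ L) (hne : i ≠ k)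
    (hik : ¬Γ.Adj i k) (hkj : Γ.Adj k j) (h : gen i * x = gen j * (gen k * y)) :
    FactorsThroughLcm i (gen k * x) j (gen k * (gen j * y)) := by
  have hlen := congrArg length h
  simp only [length_mul, length_gen] at hx hlen
  have hki : ¬Γ.Adj k i := fun h => hik h.symm
  obtain rfl | hij := eq_or_ne i j
  · exact absurd hkj hki
  by_cases hadj : Γ.Adj i j
  · obtain ⟨v, rfl, hv⟩ := hL.exists_of_adj (by omega) hadj h
    simp only [length_mul, length_gen] at hx hlen
    obtain ⟨u, rfl, hu⟩ := hL.exists_of_not_adj (by omega) hne.symm hki hv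
    simp only [length_mul, length_gen] at hx hlen
    obtain ⟨w, rfl, rfl⟩ := hL.exists_of_adj (by omega) hkj.symm hu
    refine (FactorsThroughLcm.iff_of_adj hadj).2 ⟨gen k * (gen j * (gen i * w)), ?_, ?_⟩
    · rw [gen_mul_left_comm hik (gen j * w), gen_braid_assoc hkj, gen_braid_assoc hadj.symm,
        gen_mul_left_comm hki]
    · rw [gen_braid_assoc hadj.symm, gen_mul_left_comm hki, gen_mul_left_comm hik w,
        gen_braid_assoc hkj]
  · obtain ⟨v, rfl, hv⟩ := hL.exists_of_not_adj (by omega) hij hadj h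
    simp only [length_mul, length_gen] at hx hlen
    obtain ⟨u, rfl, rfl⟩ := hL.exists_of_not_adj (by omega) hne.symm hki hv
    refine (FactorsThroughLcm.iff_of_not_adj hij hadj).2 ⟨gen k * (gen j * u), ?_, ?_⟩
    · rw [gen_braid_assoc hkj]
    · rw [gen_mul_left_comm (fun h => hadj h.symm), gen_mul_left_comm hki]

theorem trans_of_adj_of_adj (hΓ : Γ.CliqueFree 3) (hL : LcmBelow Γ L)
    (hx : length (gen i * (gen k * x)) ≤ L) (hik : Γ.Adj i k) (hkj : Γ.Adj k j)
    (h : gen i * (gen k * x) = gen j * (gen k * y)) :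
    FactorsThroughLcm i (gen k * (gen i * x)) j (gen k * (gen j * y)) := by
  have hlen := congrArg length h
  simp only [length_mul, length_gen] at hx hlen
  obtain rfl | hij := eq_or_ne i j
  · have hxy : x = y := hL.gen_mul_left_cancel (by omega)
      (hL.gen_mul_left_cancel (by simp only [length_mul, length_gen]; omega) h)
    exact .of_eq (by rw [hxy])
  have hadj : ¬Γ.Adj i j := fun hadj => by
    classical exact hΓ _ (SimpleGraph.is3Clique_triple_iff.2 ⟨hik, hadj, hkj⟩)
  obtain ⟨v, hv, hv'⟩ :=
    hL.exists_of_not_adj (by simp only [length_mul, length_gen]; omega) hij hadj h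
  obtain ⟨u, rfl, hu⟩ := hL.exists_of_adj (by omega) hkj hv
  obtain ⟨u', rfl, hu'⟩ := hL.exists_of_adj (by omega) hik.symm hv'
  simp only [length_mul, length_gen] at hx
  have hlen' := congrArg length (hu.symm.trans hu')
  simp only [length_mul, length_gen] at hlen'
  have hcancel : gen j * u = gen i * u' := hL.gen_mul_left_cancel
    (by simp only [length_mul, length_gen]; omega) (hu.symm.trans hu')
  obtain ⟨w, rfl, rfl⟩ :=
    hL.exists_of_not_adj (by omega) hij.symm (fun h => hadj h.symm) hcancel
  refine (FactorsThroughLcm.iff_of_not_adj hij hadj).2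
    ⟨gen k * (gen j * (gen i * (gen k * w))), ?_, ?_⟩
  · rw [gen_mul_left_comm hadj, gen_braid_assoc hik, gen_braid_assoc hkj]
  · rw [gen_mul_left_comm fun h => hadj h.symm, gen_braid_assoc hkj.symm,
      gen_braid_assoc hik.symm, gen_mul_left_comm fun h => hadj h.symm]

/-- This is Garside's cube condition for the three generators `i`, `k`, `j`. -/
theorem trans (hΓ : Γ.CliqueFree 3) (hL : LcmBelow Γ L) (hy : length y ≤ L)
    (hxy : FactorsThroughLcm i x k y) (hyz : FactorsThroughLcm k y j z) :
    FactorsThroughLcm i x j z := by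
  obtain rfl | hik := eq_or_ne i k
  · rwa [hxy.eq]
  obtain rfl | hkj := eq_or_ne k j
  · rwa [← hyz.eq]
  by_cases hadj : Γ.Adj i k <;> by_cases hadj' : Γ.Adj k j
  · obtain ⟨v, rfl, rfl⟩ := (FactorsThroughLcm.iff_of_adj hadj).1 hxy
    obtain ⟨w, hw, rfl⟩ := (FactorsThroughLcm.iff_of_adj hadj').1 hyz
    exact hL.trans_of_adj_of_adj hΓ hy hadj hadj' hw
  · obtain ⟨v, rfl, rfl⟩ := (FactorsThroughLcm.iff_of_adj hadj).1 hxy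
    obtain ⟨w, hw, rfl⟩ := (FactorsThroughLcm.iff_of_not_adj hkj hadj').1 hyz
    exact (hL.trans_of_not_adj_of_adj (hw ▸ hy) hkj.symm (fun h => hadj' h.symm) hadj.symm
      hw.symm).symm
  · obtain ⟨v, rfl, rfl⟩ := (FactorsThroughLcm.iff_of_not_adj hik hadj).1 hxy
    obtain ⟨w, hw, rfl⟩ := (FactorsThroughLcm.iff_of_adj hadj').1 hyz
    exact hL.trans_of_not_adj_of_adj hy hik hadj hadj' hw
  · obtain ⟨v, rfl, rfl⟩ := (FactorsThroughLcm.iff_of_not_adj hik hadj).1 hxy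
    obtain ⟨w, hw, rfl⟩ := (FactorsThroughLcm.iff_of_not_adj hkj hadj').1 hyz
    exact hL.trans_of_not_adj_of_not_adj hy hadj hadj' hw

end LcmBelow

/-- The heads of two words, together with the elements represented by their tails, factor through
the least common multiple of the heads; the empty word only matches itself. -/
def HeadsFactor (Γ : SimpleGraph V) (u v : FreeMonoid V) : Prop :=
  match u.toList, v.toList with
  | [], [] => True
  | i :: u', j :: v' =>
    FactorsThroughLcm i (mk Γ (.ofList u')) j
      (mk Γ (.ofList v'))
  | _, _ => False

namespace HeadsFactor

variable {u v w u' v' : FreeMonoid V}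

theorem of_mul_of_mul_iff : HeadsFactor Γ (.of i * u) (.of j * v) ↔
    FactorsThroughLcm i (mk Γ u) j
      (mk Γ v) :=
  Iff.rfl

theorem refl (u : FreeMonoid V) : HeadsFactor Γ u u := by
  cases u with
  | one => trivial
  | of_mul i u => exact of_mul_of_mul_iff.2 (.of_eq rfl)

theorem symm (h : HeadsFactor Γ u v) : HeadsFactor Γ v u := by
  cases u <;> cases v
  · trivial
  · exact h
  · exact h
  · exact of_mul_of_mul_iff.2 (of_mul_of_mul_iff.1 h).symm

theorem mul (h : HeadsFactor Γ u v) (h' : HeadsFactor Γ u' v')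
    (heq : mk Γ u' = mk Γ v') :
    HeadsFactor Γ (u * u') (v * v') := by
  cases u <;> cases v
  · rwa [one_mul, one_mul]
  · exact h.elim
  · exact h.elim
  · rw [mul_assoc, mul_assoc, of_mul_of_mul_iff, map_mul, map_mul, heq]
    exact (of_mul_of_mul_iff.1 h).mul_right _

theorem trans (hΓ : Γ.CliqueFree 3) {L : ℕ} (hL : LcmBelow Γ L)
    (hlen : length (mk Γ v) ≤ L + 1) (h : HeadsFactor Γ u v)
    (h' : HeadsFactor Γ v w) : HeadsFactor Γ u w := by
  cases v with
  | one =>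
    cases u
    · exact h'
    · exact h.elim
  | of_mul k v =>
    cases u
    · exact h.elim
    cases w
    · exact h'.elim
    have hlen' : 1 + length (mk Γ v) ≤ L + 1 := by
      simpa only [map_mul, mk_of, length_mul, length_gen] using hlen
    exact of_mul_of_mul_iff.2
      (hL.trans hΓ (by omega) (of_mul_of_mul_iff.1 h) (of_mul_of_mul_iff.1 h'))

theorem of_artinRel (h : ArtinRel Γ u v) : HeadsFactor Γ u v := by
  cases h with
  | @comm i j h =>
    rw [of_mul_of_mul_iff]
    obtain rfl | hne := eq_or_ne i j
    · exact .of_eq rfl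
    · exact (FactorsThroughLcm.iff_of_not_adj hne h).2 ⟨1, (mul_one _).symm, (mul_one _).symm⟩
  | braid h =>
    rw [mul_assoc, mul_assoc, of_mul_of_mul_iff]
    exact (FactorsThroughLcm.iff_of_adj h).2
      ⟨1, by simp only [map_mul, mk_of, mul_one], by simp only [map_mul, mk_of, mul_one]⟩

theorem of_mk_eq_mk (hΓ : Γ.CliqueFree 3) {L : ℕ} (hL : LcmBelow Γ L)
    (hlen : length (mk Γ u) ≤ L + 1)
    (h : mk Γ u = mk Γ v) :
    HeadsFactor Γ u v := by
  replace h : ConGen.Rel (ArtinRel Γ) u v := PresentedMonoid.mk_eq_mk_iff.1 h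
  have hmk {u v} (h : ConGen.Rel (ArtinRel Γ) u v) :
      mk Γ u = mk Γ v :=
    PresentedMonoid.mk_eq_mk_iff.2 h
  induction h with
  | of _ _ h => exact of_artinRel h
  | refl u => exact refl u
  | symm h ih => exact (ih (hmk h ▸ hlen)).symm
  | trans h _ ih ih' => exact (ih hlen).trans hΓ hL (hmk h ▸ hlen) (ih' (hmk h ▸ hlen))
  | mul _ h ih ih' =>
    simp only [map_mul, length_mul] at hlen
    exact (ih (by omega)).mul (ih' (by omega)) (hmk h)

end HeadsFactor

theorem lcmBelow (hΓ : Γ.CliqueFree 3) (L : ℕ) : LcmBelow Γ L := by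
  induction L with
  | zero => exact fun i j x y hx => absurd hx (Nat.not_lt_zero _)
  | succ L hL =>
    intro i j x y hx h
    obtain ⟨u, rfl⟩ : ∃ u, mk Γ u = x := PresentedMonoid.surjective_mk x
    obtain ⟨v, rfl⟩ : ∃ v, mk Γ v = y := PresentedMonoid.surjective_mk y
    refine HeadsFactor.of_mul_of_mul_iff.1 (HeadsFactor.of_mk_eq_mk hΓ hL ?_ ?_)
    · rw [map_mul, length_mul, mk_of, length_gen]
      omega
    · rwa [map_mul, map_mul]

theorem factorsThroughLcm_of_gen_mul_eq (hΓ : Γ.CliqueFree 3) (h : gen i * x = gen j * y) :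
    FactorsThroughLcm i x j y :=
  lcmBelow hΓ (length x + 1) (Nat.lt_succ_self _) h

theorem isLeftCancelMul (hΓ : Γ.CliqueFree 3) : IsLeftCancelMul (ArtinMonoid Γ) where
  mul_left_cancel x := by
    induction x using induction_gen_mul with
    | one => exact fun y z h => by simpa only [one_mul] using h
    | gen_mul i x ih =>
      intro y z h
      simp only [mul_assoc] at h
      exact ih (factorsThroughLcm_of_gen_mul_eq hΓ h).eq

/-! ### Conjugating powers of generators in the monoid -/

theorem complement_dvd_of_gen_dvd_pow_mul (hΓ : Γ.CliqueFree 3) {n : ℕ} (hn : n ≠ 0)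
    (h : gen j ∣ gen i ^ n * x) : complement i j ∣ x := by
  obtain ⟨n, rfl⟩ := Nat.exists_eq_succ_of_ne_zero hn
  obtain ⟨y, hy⟩ := h
  induction n generalizing y with
  | zero =>
    rw [pow_one] at hy
    obtain ⟨z, hz, -⟩ := factorsThroughLcm_of_gen_mul_eq hΓ hy
    exact ⟨z, hz⟩
  | succ n ih =>
    obtain rfl | hne := eq_or_ne i j
    · exact complement_self i ▸ one_dvd x
    rw [pow_succ', mul_assoc] at hy
    obtain ⟨z, hz, -⟩ := factorsThroughLcm_of_gen_mul_eq hΓ hy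
    obtain ⟨w, hw⟩ := (gen_dvd_complement hne).mul_right z
    exact ih n.succ_ne_zero w (hz.trans hw)

theorem eq_of_gen_dvd_gen_pow (hΓ : Γ.CliqueFree 3) {n : ℕ}
    (h : gen j ∣ (gen i ^ n : ArtinMonoid Γ)) : i = j := by
  by_contra hne
  obtain rfl | hn := eq_or_ne n 0
  · exact not_gen_dvd_one j (pow_zero (gen i : ArtinMonoid Γ) ▸ h)
  · rw [← mul_one (gen i ^ n)] at h
    exact not_gen_dvd_one j ((gen_dvd_complement hne).trans
      (complement_dvd_of_gen_dvd_pow_mul hΓ hn h))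

theorem exists_semiconjBy_and_dvd (hΓ : Γ.CliqueFree 3) {n : ℕ} (hn : n ≠ 0) (hx : x ≠ 1)
    (h : SemiconjBy x (gen j ^ n) (gen i ^ n)) :
    ∃ (u : ArtinMonoid Γ) (i' : V), u ∣ x ∧ 0 < length u ∧ SemiconjBy u (gen i') (gen i) := by
  cases x using induction_gen_mul with
  | one => exact absurd rfl hx
  | gen_mul k y =>
    obtain rfl | hne := eq_or_ne i k
    · exact ⟨gen i, i, dvd_mul_right _ _, by rw [length_gen]; exact one_pos, Commute.refl _⟩
    · have hdvd : complement i k ∣ gen k * y :=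
        complement_dvd_of_gen_dvd_pow_mul hΓ hn ⟨y * gen j ^ n, by rw [← h.eq, mul_assoc]⟩
      obtain ⟨i', hi'⟩ := exists_semiconjBy_complement (Γ := Γ) i k
      obtain ⟨w, hw⟩ := gen_dvd_complement (Γ := Γ) hne
      exact ⟨_, i', hdvd, by rw [hw, length_mul, length_gen]; omega, hi'⟩

theorem semiconjBy_gen_of_pow (hΓ : Γ.CliqueFree 3) {n : ℕ} (hn : n ≠ 0)
    (h : SemiconjBy x (gen j ^ n) (gen i ^ n)) : SemiconjBy x (gen j) (gen i) := by
  induction hlen : length x using Nat.strong_induction_on generalizing x i with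
  | _ L ih =>
    by_cases hx : x = 1
    · subst hx
      have hij : (gen j ^ n : ArtinMonoid Γ) = gen i ^ n := by simpa using h.eq
      obtain rfl := eq_of_gen_dvd_gen_pow hΓ (hij ▸ dvd_pow_self (gen j) hn)
      exact SemiconjBy.one_left _
    · have := isLeftCancelMul hΓ
      obtain ⟨u, i', ⟨y, rfl⟩, hpos, hu⟩ := exists_semiconjBy_and_dvd hΓ hn hx h
      rw [length_mul] at hlen
      exact hu.mul_left
        (ih (length y) (by omega) (semiconjBy_of_mul_left (hu.pow_right n) h) rfl)

/-! ### The braid group as a group of fractions -/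

theorem exists_isCentralDenominator (m : ℕ) :
    ∃ c : ArtinMonoid (SimpleGraph.pathGraph m), IsCentralDenominator c := by
  let g (k : ℕ) : ArtinMonoid (SimpleGraph.pathGraph m) := if h : k < m then gen ⟨k, h⟩ else 1
  have hgen {k : ℕ} (h : k < m) : g k = gen ⟨k, h⟩ := dif_pos h
  have hg : IsBraidSeq g m :=
    { commute := fun i j hij hj => by
        rw [hgen hj, hgen (by omega)]
        exact commute_gen (by simp only [SimpleGraph.pathGraph_adj]; omega)
      braid := fun i hi => by
        rw [hgen hi, hgen (by omega)]
        exact gen_braid (SimpleGraph.pathGraph_adj.2 (Or.inl rfl)) }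
  refine ⟨fullTwist g m,
    isCentralDenominator_of_closure_eq_top (PresentedMonoid.closure_range_of _) ?_ ?_⟩
  · rintro _ ⟨i, rfl⟩
    have hcomm := hg.commute_fullTwist i.isLt
    rwa [hgen] at hcomm
  · rintro _ ⟨i, rfl⟩
    have hdvd := hg.dvd_fullTwist i.isLt
    rwa [hgen] at hdvd

end ArtinMonoid

namespace BraidGroup

open SimpleGraph (pathGraph)

variable {n : ℕ} {i j : Fin (n - 1)} {a : BraidGroup n}

theorem commute_σ (h : ¬(pathGraph (n - 1)).Adj i j) : Commute (σ i) (σ j) := by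
  have hfar {i j : Fin (n - 1)} (h : (i : ℕ) + 1 < j) : Commute (σ i) (σ j) := by
    have hrel : σ i * σ j * (σ i)⁻¹ * (σ j)⁻¹ = 1 :=
      PresentedGroup.one_of_mem (rels := braidRels (n - 1)) (Or.inl ⟨i, j, h, rfl⟩)
    exact mul_inv_eq_iff_eq_mul.1 (mul_inv_eq_one.1 hrel)
  rw [SimpleGraph.pathGraph_adj] at h
  obtain h | h | h : i = j ∨ (i : ℕ) + 1 < j ∨ (j : ℕ) + 1 < i := by omega
  · exact h ▸ Commute.refl _
  · exact hfar h
  · exact (hfar h).symm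

theorem σ_braid (h : (pathGraph (n - 1)).Adj i j) : σ i * σ j * σ i = σ j * σ i * σ j := by
  have hadj {i j : Fin (n - 1)} (h : (i : ℕ) + 1 = j) : σ i * σ j * σ i = σ j * σ i * σ j :=
    mul_inv_eq_one.1
      (PresentedGroup.one_of_mem (rels := braidRels (n - 1)) (Or.inr ⟨i, j, h, rfl⟩))
  obtain h | h := SimpleGraph.pathGraph_adj.1 h
  · exact hadj h
  · exact (hadj h).symm

/-- The canonical map from the positive braid monoid to the braid group. -/
def ofPositive (n : ℕ) : ArtinMonoid (pathGraph (n - 1)) →* BraidGroup n :=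
  ArtinMonoid.lift σ (fun _ _ => commute_σ) (fun _ _ => σ_braid)

@[simp]
theorem ofPositive_gen (i : Fin (n - 1)) : ofPositive n (ArtinMonoid.gen i) = σ i := rfl

theorem exists_comp_ofPositive_eq {G : Type*} [Group G]
    (f : ArtinMonoid (pathGraph (n - 1)) →* G) :
    ∃ F : BraidGroup n →* G, F.comp (ofPositive n) = f := by
  have hrels : ∀ r ∈ braidRels (n - 1), FreeGroup.lift (fun i => f (.gen i)) r = 1 := by
    rintro _ (⟨i, j, hij, rfl⟩ | ⟨i, j, hij, rfl⟩)
    · have hcomm := ArtinMonoid.commute_gen (Γ := pathGraph (n - 1)) (i := i) (j := j)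
        (by rw [SimpleGraph.pathGraph_adj]; omega)
      simpa [mul_inv_eq_one, mul_inv_eq_iff_eq_mul] using (hcomm.map f).eq
    · have hbraid := ArtinMonoid.gen_braid (Γ := pathGraph (n - 1)) (i := i) (j := j)
        (by rw [SimpleGraph.pathGraph_adj]; omega)
      rw [map_mul, map_inv, mul_inv_eq_one]
      simpa using congrArg f hbraid
  exact ⟨PresentedGroup.toGroup hrels,
    PresentedMonoid.ext _ fun i => PresentedGroup.toGroup.of hrels⟩

theorem ofPositive_injective (n : ℕ) : Function.Injective (ofPositive n) := by
  have := ArtinMonoid.isLeftCancelMul (Γ := pathGraph (n - 1)) SimpleGraph.cliqueFree_hasse_three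
  obtain ⟨c, hc⟩ := ArtinMonoid.exists_isCentralDenominator (n - 1)
  obtain ⟨G, _, f, hf⟩ := hc.exists_injective_monoidHom
  obtain ⟨F, rfl⟩ := exists_comp_ofPositive_eq f
  rw [MonoidHom.coe_comp] at hf
  exact hf.of_comp

theorem closure_range_ofPositive (n : ℕ) :
    Subgroup.closure (Set.range (ofPositive n)) = ⊤ := by
  refine top_unique (PresentedGroup.closure_range_of (braidRels (n - 1)) ▸
    Subgroup.closure_mono ?_)
  rintro _ ⟨i, rfl⟩
  exact ⟨_, ofPositive_gen i⟩

theorem semiconjBy_σ_of_pow {k : ℕ} (hk : k ≠ 0) (h : SemiconjBy a (σ j ^ k) (σ i ^ k)) :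
    SemiconjBy a (σ j) (σ i) := by
  obtain ⟨c, hc⟩ := ArtinMonoid.exists_isCentralDenominator (n - 1)
  exact hc.semiconjBy_of_positive (x' := .gen j ^ k) (y' := .gen i ^ k)
    (closure_range_ofPositive n) (ofPositive_injective n)
    (fun _ => ArtinMonoid.semiconjBy_gen_of_pow SimpleGraph.cliqueFree_hasse_three hk)
    (by simpa using h)

theorem semiconjBy_σ_of_zpow {k : ℤ} (hk : k ≠ 0) (h : SemiconjBy a (σ j ^ k) (σ i ^ k)) :
    SemiconjBy a (σ j) (σ i) := by
  obtain ⟨l, rfl | rfl⟩ := k.eq_nat_or_neg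
  · rw [zpow_natCast, zpow_natCast] at h
    exact semiconjBy_σ_of_pow (by omega) h
  · rw [zpow_neg, zpow_neg, SemiconjBy.inv_right_iff, zpow_natCast, zpow_natCast] at h
    exact semiconjBy_σ_of_pow (by omega) h

end BraidGroup

theorem conjugating_power_unique_general (n : ℕ) (i t : Fin (n - 1)) (a : BraidGroup n)
    (ha : a * σ t ≠ σ i * a) (j q : ℤ)
    (h : σ i ^ (-j) * a * σ t ^ j = σ i ^ (-q) * a * σ t ^ q) : j = q := by
  by_contra hjq
  have hpow : SemiconjBy a (σ t ^ (j - q)) (σ i ^ (j - q)) := semiconjBy_zpow_sub_of_conj_eq h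
  exact ha (BraidGroup.semiconjBy_σ_of_zpow (sub_ne_zero.2 hjq) hpow).eq

/-- Uniqueness of the conjugating power of a generator: if `a` does not
commute with `σ_i` and `σ_i^(-j) a σ_i^j = σ_i^(-q) a σ_i^q`, then `j = q`. -/
theorem conjugating_power_unique (n : ℕ) (hn : 2 ≤ n)
    (i : Fin (n - 1)) (a : BraidGroup n) (ha : a * σ i ≠ σ i * a)
    (j q : ℤ)
    (h : (σ (n := n) i) ^ (-j) * a * (σ i) ^ j =
          (σ i) ^ (-q) * a * (σ i) ^ q) : j = q := by
  exact conjugating_power_unique_general n i i a ha j q h
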